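/- Let x = Σ_{i=1}^m c_i x_i be an (n,ε)-special convex combination with ‖x_i‖ ≤ 1 for 1 ≤ i ≤ m, and let f ∈ W_iw be a weighted functional with vector weight (j_1,...,j_l) such that n_{j_1} + ... + n_{j_l} < n. Then |f(x)| ≤ (1 + 2ε·w(f))/w(f), where w(f) = m_{j_1}···m_{j_l}. -/

import Mathlib

/-!
Write `f = w⁻¹ ∑ g_q`, and call an index `i` *split* if the support of `x_i` meets the supports of at
least two of the `g_q`.

If `i` is not split, then `∑ g_q (x_i)` has at most one nonzero term, so `|f (x_i)| ≤ w⁻¹` because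
`‖x_i‖ ≤ 1`; these indices contribute at most `w⁻¹ ∑ c_i = w⁻¹`. If `i` is split, then
`|f (x_i)| ≤ 1` because `f ∈ W_iw`, and it remains to see that the split indices carry total mass at
most `2ε`. A split `x_i` has some `min supp g_q` strictly between `min supp x_i` and every later
`min supp x_j`. Hence, after removal of the first one, the points `min supp x_i` (`i` split) form a
spread of a subset of `{min supp g_q}`, which lies in the Schreier family of order
`∑ n_{j_k} ≤ n - 1` (`erase_min_mem`). So their mass is less than `ε`, and so is
the mass of the removed point, a singleton also belonging to the family of order `n - 1`.

The norm is a real supremum, so evaluating it needs that the coordinates of every `f ∈ W_iw` are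
bounded by `1` (`WIW.abs_le_one`); absolute values are handled by the symmetry of `W_iw` (`WIW.neg`).
-/


open Filter Topology
open scoped ENNReal

noncomputable section

/-! ### Abstract Banach space notions -/

section Abstract

variable {X : Type*} [NormedAddCommGroup X] [NormedSpace ℝ X]

/-- A sequence is normalized if every term has norm one. -/
def Normalized (x : ℕ → X) : Prop := ∀ i, ‖x i‖ = 1

/-- A sequence is weakly null if it tends to `0` in the weak topology. -/
def WeaklyNull (x : ℕ → X) : Prop :=
  ∀ f : X →L[ℝ] ℝ, Tendsto (fun i => f (x i)) atTop (𝓝 (0 : ℝ))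

end Abstract

/-- The ℓ₁ norm of finite coefficient vectors (the norms of finite linear
combinations of the unit vector basis of ℓ₁). -/
def l1Norm : ∀ m : ℕ, (Fin m → ℝ) → ℝ := fun _ a => ∑ i, |a i|

/-- The sup norm of finite coefficient vectors (the norms of finite linear
combinations of the unit vector basis of c₀). -/
def supNorm : ∀ m : ℕ, (Fin m → ℝ) → ℝ := fun _ a => ⨆ i, |a i|

/-- The ℓ_p norm of finite coefficient vectors, `1 ≤ p < ∞`. -/
def lpNormFin (p : ℝ) : ∀ m : ℕ, (Fin m → ℝ) → ℝ := fun _ a => (∑ i, |a i| ^ p) ^ (1 / p)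

/-- The ℓ_q norms of finite coefficient vectors, `q ∈ [1,∞]`, where `q = ∞`
corresponds to `c₀`. -/
def finLqNorm (q : ℝ≥0∞) : ∀ m : ℕ, (Fin m → ℝ) → ℝ := fun m a =>
  if q = ⊤ then supNorm m a else lpNormFin q.toReal m a

/-- The family of seminorms `ν` (of finite combinations of a sequence in a seminormed
space) is `C`-equivalent to the family `μ`:  there are `A B > 0` with `A * B ≤ C` and
`(1/A) * μ ≤ ν ≤ B * μ`. -/
def NormFamEquiv (C : ℝ) (μ ν : ∀ m : ℕ, (Fin m → ℝ) → ℝ) : Prop :=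
  ∃ A B : ℝ, 0 < A ∧ 0 < B ∧ A * B ≤ C ∧
    ∀ (m : ℕ) (a : Fin m → ℝ), (1 / A) * μ m a ≤ ν m a ∧ ν m a ≤ B * μ m a

section Abstract2

variable {X : Type*} [NormedAddCommGroup X] [NormedSpace ℝ X]

/-- The sequence `x` generates the spreading model whose finite-combination
seminorms are given by the family `ν`. -/
def GeneratesSpreadingModel (x : ℕ → X) (ν : ∀ m : ℕ, (Fin m → ℝ) → ℝ) : Prop :=
  ∀ (m : ℕ) (a : Fin m → ℝ), ∀ ε > (0 : ℝ), ∃ N : ℕ, ∀ j : Fin m → ℕ,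
    StrictMono j → (∀ i, N ≤ j i) → |‖∑ i, a i • x (j i)‖ - ν m a| < ε

/-- The array of sequences `A` (row `A i` is the `i`-th sequence) generates the
asymptotic model whose finite-combination seminorms are given by `ν`. -/
def GeneratesAsymptoticModel (A : ℕ → ℕ → X) (ν : ∀ l : ℕ, (Fin l → ℝ) → ℝ) : Prop :=
  ∀ (l : ℕ) (a : Fin l → ℝ), ∀ ε > (0 : ℝ), ∃ N : ℕ, ∀ j : Fin l → ℕ,
    StrictMono j → (∀ i, N ≤ j i) → |‖∑ i, a i • A i (j i)‖ - ν l a| < ε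

/-- `e` is a Schauder basis of `X`. -/
def IsSchauderBasis (e : ℕ → X) : Prop :=
  ∀ x : X, ∃! a : ℕ → ℝ,
    Tendsto (fun n => ∑ i ∈ Finset.range n, a i • e i) atTop (𝓝 x)

/-- The basis `e` is 1-unconditional. -/
def OneUnconditional (e : ℕ → X) : Prop :=
  ∀ (F : Finset ℕ) (a ε : ℕ → ℝ), (∀ i, ε i = 1 ∨ ε i = -1) →
    ‖∑ i ∈ F, (ε i * a i) • e i‖ = ‖∑ i ∈ F, a i • e i‖

/-- `x` is a block sequence with respect to the basis `e`. -/
def IsBlockSeq (e : ℕ → X) (x : ℕ → X) : Prop :=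
  ∃ F : ℕ → Finset ℕ, (∀ k, (F k).Nonempty) ∧
    (∀ k l : ℕ, k < l → ∀ i ∈ F k, ∀ j ∈ F l, i < j) ∧
    ∀ k, x k ≠ 0 ∧ x k ∈ Submodule.span ℝ (e '' ↑(F k))

/-- `z` is a finite block sequence with respect to the basis `e`. -/
def IsFinBlockSeq (e : ℕ → X) {n : ℕ} (z : Fin n → X) : Prop :=
  ∃ F : Fin n → Finset ℕ, (∀ k, (F k).Nonempty) ∧
    (∀ k l : Fin n, k < l → ∀ i ∈ F k, ∀ j ∈ F l, i < j) ∧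
    ∀ k, z k ≠ 0 ∧ z k ∈ Submodule.span ℝ (e '' ↑(F k))

/-- `Y` is a block subspace of `X` (with respect to the basis `e`): the closed
linear span of an infinite normalized block sequence. -/
def IsBlockSubspace (e : ℕ → X) (Y : Set X) : Prop :=
  ∃ y : ℕ → X, IsBlockSeq e y ∧ Normalized y ∧
    Y = closure (↑(Submodule.span ℝ (Set.range y)) : Set X)

/-- The finite sequence `z` is `C`-equivalent to a finite basic sequence whose
finite-combination norms are given by `μ`. -/
def FinSeqEquiv (C : ℝ) {n : ℕ} (μ : (Fin n → ℝ) → ℝ) (z : Fin n → X) : Prop :=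
  ∃ A B : ℝ, 0 < A ∧ 0 < B ∧ A * B ≤ C ∧
    ∀ a : Fin n → ℝ, (1 / A) * μ a ≤ ‖∑ i, a i • z i‖ ∧ ‖∑ i, a i • z i‖ ≤ B * μ a

/-- The finite basic sequence with combination norms `μ` is block representable
in `Y ⊆ X`. -/
def BlockRepresentableIn (e : ℕ → X) (Y : Set X) {n : ℕ} (μ : (Fin n → ℝ) → ℝ) : Prop :=
  ∀ ε > (0 : ℝ), ∃ z : Fin n → X, (∀ i, z i ∈ Y) ∧ IsFinBlockSeq e z ∧
    FinSeqEquiv (1 + ε) μ z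

/-- `x` is a (Schauder) basic sequence. -/
def IsBasicSeq (x : ℕ → X) : Prop :=
  (∀ i, x i ≠ 0) ∧ ∃ K : ℝ, 0 < K ∧ ∀ (a : ℕ → ℝ) (m n : ℕ), m ≤ n →
    ‖∑ i ∈ Finset.range m, a i • x i‖ ≤ K * ‖∑ i ∈ Finset.range n, a i • x i‖

end Abstract2

/-- A plegma of `k` strictly increasing `l`-tuples of naturals. -/
def IsPlegma (k l : ℕ) (s : Fin k → Fin l → ℕ) : Prop :=
  (∀ i, StrictMono (s i)) ∧
  (∀ i₁ i₂ : Fin k, ∀ j₁ j₂ : Fin l, j₁ < j₂ → s i₁ j₁ < s i₂ j₂) ∧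
  (∀ i₁ i₂ : Fin k, i₁ < i₂ → ∀ j, s i₁ j ≤ s i₂ j)

/-- A strict plegma: a plegma with pairwise disjoint tuples. -/
def IsStrictPlegma (k l : ℕ) (s : Fin k → Fin l → ℕ) : Prop :=
  IsPlegma k l s ∧ ∀ i₁ i₂ : Fin k, i₁ ≠ i₂ → ∀ j₁ j₂ : Fin l, s i₁ j₁ ≠ s i₂ j₂

section Abstract3

variable {X : Type*} [NormedAddCommGroup X] [NormedSpace ℝ X]

/-- The `l`-array `x` generates the joint spreading model with finite-combination
seminorms `ν`. -/
def GeneratesJSM (l : ℕ) (x : Fin l → ℕ → X)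
    (ν : ∀ k : ℕ, (Fin l → Fin k → ℝ) → ℝ) : Prop :=
  ∀ (k : ℕ) (a : Fin l → Fin k → ℝ), ∀ ε > (0 : ℝ), ∃ N : ℕ,
    ∀ s : Fin l → Fin k → ℕ, IsStrictPlegma l k s → (∀ i j, N ≤ s i j) →
      |‖∑ i, ∑ j, a i j • x i (s i j)‖ - ν k a| < ε

/-- `X` admits a unique joint spreading model with respect to the family of
sequences `F`. -/
def UniqueJSM (F : Set (ℕ → X)) : Prop :=
  ∃ C : ℝ, 1 ≤ C ∧ ∀ (l : ℕ) (x y : Fin l → ℕ → X),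
    (∀ i, x i ∈ F) → (∀ i, y i ∈ F) →
    ∀ ν μ, GeneratesJSM l x ν → GeneratesJSM l y μ →
      ∃ A B : ℝ, 0 < A ∧ 0 < B ∧ A * B ≤ C ∧
        ∀ (k : ℕ) (a : Fin l → Fin k → ℝ),
          (1 / A) * μ k a ≤ ν k a ∧ ν k a ≤ B * μ k a

/-- `X` admits a unique asymptotic model with respect to the family of
sequences `F`. -/
def UniqueAM (F : Set (ℕ → X)) : Prop :=
  ∀ x y : ℕ → ℕ → X, (∀ i, x i ∈ F) → (∀ i, y i ∈ F) →
    ∀ ν μ, GeneratesAsymptoticModel x ν → GeneratesAsymptoticModel y μ →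
      ∃ C : ℝ, 1 ≤ C ∧ NormFamEquiv C μ ν

end Abstract3

/-- A bundled Banach-space candidate. -/
structure BanachPkg : Type 1 where
  X : Type
  [grp : NormedAddCommGroup X]
  [mod : NormedSpace ℝ X]

attribute [instance] BanachPkg.grp BanachPkg.mod

/-! ### c₀₀ and the norming sets -/

/-- The finitely supported real sequences. -/
abbrev c00 : Type := ℕ →₀ ℝ

/-- Minimum of the support (0 for the zero vector). -/
def minSupp (x : c00) : ℕ := if h : x.support.Nonempty then x.support.min' h else 0

/-- Maximum of the support (0 for the zero vector). -/
def maxSupp (x : c00) : ℕ := if h : x.support.Nonempty then x.support.max' h else 0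

/-- Minimum of a finset of naturals (0 if empty). -/
def finsetMin (F : Finset ℕ) : ℕ := if h : F.Nonempty then F.min' h else 0

/-- `x < y` as successive (block) vectors. -/
def Blocks (x y : c00) : Prop := maxSupp x < minSupp y

/-- The Schreier families. -/
def Schreier : ℕ → Set (Finset ℕ)
  | 0 => {F | ∃ i : ℕ, F = {i}}
  | n + 1 => {F | ∃ (d : ℕ) (G : Fin d → Finset ℕ),
      (∀ k, G k ∈ Schreier n) ∧
      (∀ k l : Fin d, k < l → ∀ i ∈ G k, ∀ j ∈ G l, i < j) ∧
      (∀ i ∈ F, d ≤ i) ∧ F = Finset.univ.biUnion G}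

/-- The family `A_m` of sets of cardinality at most `m`. -/
def SchreierA (m : ℕ) : Set (Finset ℕ) := {F | F.card ≤ m}

/-- The operation `A * B` on families of finite sets. -/
def famStar (A B : Set (Finset ℕ)) : Set (Finset ℕ) :=
  {F | ∃ (d : ℕ) (G : Fin d → Finset ℕ),
      (∀ k, G k ∈ B) ∧ (∀ k, (G k).Nonempty) ∧
      (∀ k l : Fin d, k < l → ∀ i ∈ G k, ∀ j ∈ G l, i < j) ∧
      (Finset.univ.image fun k => finsetMin (G k)) ∈ A ∧ F = Finset.univ.biUnion G}

/-- A finite block sequence in `c00` is `S`-admissible. -/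
def Admissible (S : Set (Finset ℕ)) {d : ℕ} (f : Fin d → c00) : Prop :=
  (∀ q, (f q).support.Nonempty) ∧
  (∀ q r : Fin d, q < r → Blocks (f q) (f r)) ∧
  (Finset.univ.image fun q => minSupp (f q)) ∈ S

/-- The two fixed sequences `(m_j)`, `(n_j)` (indexed here starting at `0`, so that
`m 0` plays the role of `m_1` etc.) together with their growth conditions. -/
structure IWParams where
  m : ℕ → ℕ
  n : ℕ → ℕ
  m_mono : StrictMono m
  n_mono : StrictMono n
  m_first : m 0 = 2
  n_first : n 0 = 1
  growth_exp : ∀ C : ℝ, 1 < C → Tendsto (fun j => C ^ (n j) / (m j : ℝ)) atTop atTop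
  growth_ratio : Tendsto (fun j => (m j : ℝ) / (m (j + 1) : ℝ)) atTop (𝓝 0)
  growth_sum : ∀ (l : ℕ) (js : Fin l → ℕ) (j : ℕ), (∀ i, js i ≤ j) →
    (∏ i, m (js i)) < m (j + 1) ^ 2 → (∑ i, n (js i)) + 1 < n (j + 1)

/-- The action of a functional `f ∈ c00` on a vector `x ∈ c00`. -/
def evalPair (f x : c00) : ℝ := f.sum fun i a => a * x i

/-- The norming set `W_iw`, together with admissible weights: `WIW P f w` means
that `f` belongs to the norming set and `w` is a weight of (one representation of)
`f`; the unit functionals `±e_i^*` have weight `∞`. -/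
inductive WIW (P : IWParams) : c00 → ℕ∞ → Prop
  | unit (i : ℕ) (s : ℝ) (hs : s = 1 ∨ s = -1) : WIW P (Finsupp.single i s) ⊤
  | op (l : ℕ) (hl : 0 < l) (js : Fin l → ℕ) (d : ℕ) (f : Fin d → c00) (w : Fin d → ℕ∞)
      (hf : ∀ q, WIW P (f q) (w q))
      (hadm : Admissible (Schreier (∑ i, P.n (js i))) f)
      (hvfg : ∀ q r : Fin d, (q : ℕ) + 1 = (r : ℕ) → (maxSupp (f q) : ℕ∞) < w r) :
      WIW P (((∏ i, P.m (js i) : ℕ) : ℝ)⁻¹ • ∑ q, f q) ((∏ i, P.m (js i) : ℕ) : ℕ∞)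

/-- Membership in the norming set `W_iw`. -/
def memWIW (P : IWParams) (f : c00) : Prop := ∃ w, WIW P f w

/-- The norm of `X_iw`, on finitely supported vectors. -/
def iwNorm (P : IWParams) (x : c00) : ℝ :=
  sSup {r | ∃ f, memWIW P f ∧ r = evalPair f x}

/-- The dual norm of a finitely supported functional, as an element of `X_iw^*`. -/
def iwDualNorm (P : IWParams) (f : c00) : ℝ :=
  sSup {r | ∃ x : c00, iwNorm P x ≤ 1 ∧ r = evalPair f x}

/-- The auxiliary norming set `W_aux^N` together with admissible weights. -/
inductive WAux (P : IWParams) (N : ℕ) : c00 → ℕ∞ → Prop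
  | unit (i : ℕ) (s : ℝ) (hs : s = 1 ∨ s = -1) : WAux P N (Finsupp.single i s) ⊤
  | op (l : ℕ) (hl : 0 < l) (js : Fin l → ℕ) (d : ℕ) (f : Fin d → c00) (w : Fin d → ℕ∞)
      (hf : ∀ q, WAux P N (f q) (w q))
      (hadm : Admissible (famStar (Schreier (∑ i, P.n (js i))) (SchreierA 3)) f)
      (hlarge : ∀ q : Fin d, 0 < (q : ℕ) → (N : ℕ∞) < w q) :
      WAux P N (((∏ i, P.m (js i) : ℕ) : ℝ)⁻¹ • ∑ q, f q) ((∏ i, P.m (js i) : ℕ) : ℕ∞)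

/-- An `(n, ε)` basic special convex combination. -/
def IsBasicSCC (n : ℕ) (ε : ℝ) (x : c00) : Prop :=
  ∃ F : Finset ℕ, x.support ⊆ F ∧ F ∈ Schreier n ∧ (∀ i, 0 ≤ x i) ∧
    (∑ i ∈ F, x i) = 1 ∧ ∀ G ⊆ F, G ∈ Schreier (n - 1) → (∑ i ∈ G, x i) < ε

/-- An `(n, ε)` special convex combination `∑ c i • x i`. -/
def IsSCC (n : ℕ) (ε : ℝ) {m : ℕ} (c : Fin m → ℝ) (x : Fin m → c00) : Prop :=
  (∀ i, (x i).support.Nonempty) ∧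
  (∀ i j : Fin m, i < j → Blocks (x i) (x j)) ∧
  IsBasicSCC n ε (∑ i, c i • Finsupp.single (minSupp (x i)) (1 : ℝ))

/-- `x` generates, with respect to the norm function `Nrm` on `c00`, the spreading
model whose finite-combination seminorms are `ν`. -/
def GeneratesSMwith (Nrm : c00 → ℝ) (x : ℕ → c00) (ν : ∀ m : ℕ, (Fin m → ℝ) → ℝ) : Prop :=
  ∀ (m : ℕ) (a : Fin m → ℝ), ∀ ε > (0 : ℝ), ∃ N : ℕ, ∀ j : Fin m → ℕ,
    StrictMono j → (∀ i, N ≤ j i) → |Nrm (∑ i, a i • x (j i)) - ν m a| < ε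

/-- The array `A` generates, with respect to the norm function `Nrm` on `c00`, the
asymptotic model whose finite-combination seminorms are `ν`. -/
def GeneratesAMwith (Nrm : c00 → ℝ) (A : ℕ → ℕ → c00) (ν : ∀ l : ℕ, (Fin l → ℝ) → ℝ) : Prop :=
  ∀ (l : ℕ) (a : Fin l → ℝ), ∀ ε > (0 : ℝ), ∃ N : ℕ, ∀ j : Fin l → ℕ,
    StrictMono j → (∀ i, N ≤ j i) → |Nrm (∑ i, a i • A i (j i)) - ν l a| < ε

/-- A normalized block sequence in `c00` with respect to a norm function. -/
def IsNormBlockSeq (Nrm : c00 → ℝ) (y : ℕ → c00) : Prop :=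
  (∀ k, (y k).support.Nonempty) ∧ (∀ k, Blocks (y k) (y (k + 1))) ∧ ∀ k, Nrm (y k) = 1

/-- A `(C, (j_i)_{i ∈ I})` rapidly increasing sequence, `I` a (finite) interval. -/
def IsRIS (P : IWParams) (C : ℝ) (I : Finset ℕ) (j : ℕ → ℕ) (x : ℕ → c00) : Prop :=
  (∀ a ∈ I, ∀ b ∈ I, ∀ c : ℕ, a ≤ c → c ≤ b → c ∈ I) ∧
  (∀ a ∈ I, ∀ b ∈ I, a < b → j a < j b) ∧
  (∀ i ∈ I, (x i).support.Nonempty) ∧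
  (∀ a ∈ I, ∀ b ∈ I, a < b → Blocks (x a) (x b)) ∧
  (∀ i ∈ I, iwNorm P (x i) ≤ C) ∧
  (∀ i ∈ I, ∀ i' ∈ I, i' + 1 = i → (maxSupp (x i') : ℝ) < Real.sqrt (P.m (j i))) ∧
  (∀ i ∈ I, ∀ f w, WIW P f w → w < ((P.m (j i) : ℕ) : ℕ∞) →
    |evalPair f (x i)| ≤ C / (w.toNat : ℝ))

/-- An infinite `(C, (j_i)_i)` rapidly increasing sequence. -/
def IsRISNat (P : IWParams) (C : ℝ) (j : ℕ → ℕ) (x : ℕ → c00) : Prop :=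
  StrictMono j ∧ (∀ i, (x i).support.Nonempty) ∧ (∀ i, Blocks (x i) (x (i + 1))) ∧
  (∀ i, iwNorm P (x i) ≤ C) ∧
  (∀ i, (maxSupp (x i) : ℝ) < Real.sqrt (P.m (j (i + 1)))) ∧
  (∀ i, ∀ f w, WIW P f w → w < ((P.m (j i) : ℕ) : ℕ∞) →
    |evalPair f (x i)| ≤ C / (w.toNat : ℝ))

/-- `X` together with the basis `e` is a realization of the space `X_iw`: a Banach
space in which `c00` sits isometrically (w.r.t. `iwNorm`) and densely. -/
structure IsIWRealization (P : IWParams) (X : Type*) [NormedAddCommGroup X]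
    [NormedSpace ℝ X] (e : ℕ → X) : Prop where
  complete : CompleteSpace X
  dense : DenseRange fun a : c00 => ∑ i ∈ a.support, a i • e i
  norm_eq : ∀ a : c00, ‖∑ i ∈ a.support, a i • e i‖ = iwNorm P a

/-- The conjugate exponent of `p`. -/
def conjExp (p : ℝ) : ℝ := p / (p - 1)

/-- The norming set `W_iw^p` together with admissible weights. -/
inductive WIWp (P : IWParams) (p : ℝ) : c00 → ℕ∞ → Prop
  | unit (i : ℕ) (s : ℝ) (hs : s = 1 ∨ s = -1) : WIWp P p (Finsupp.single i s) ⊤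
  | op (l : ℕ) (hl : 0 < l) (js : Fin l → ℕ) (d : ℕ) (f : Fin d → c00) (w : Fin d → ℕ∞)
      (lam : Fin d → ℝ) (hlam : (∑ q, |lam q| ^ conjExp p) ≤ 1)
      (hf : ∀ q, WIWp P p (f q) (w q))
      (hadm : Admissible (Schreier (∑ i, P.n (js i))) f)
      (hvfg : ∀ q r : Fin d, (q : ℕ) + 1 = (r : ℕ) → (maxSupp (f q) : ℕ∞) < w r) :
      WIWp P p (((∏ i, P.m (js i) : ℕ) : ℝ)⁻¹ • ∑ q, lam q • f q)
        ((∏ i, P.m (js i) : ℕ) : ℕ∞)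

/-- The norm of `X_iw^p` on finitely supported vectors. -/
def iwpNorm (P : IWParams) (p : ℝ) (x : c00) : ℝ :=
  sSup {r | ∃ f, (∃ w, WIWp P p f w) ∧ r = evalPair f x}

/-- The norming set of the space `X̃_iw`, together with admissible weights. -/
inductive WT (P : IWParams) : c00 → ℕ∞ → Prop
  | unit (i : ℕ) (s : ℝ) (hs : s = 1 ∨ s = -1) : WT P (Finsupp.single i s) ⊤
  | op (j : ℕ) (d : ℕ) (f : Fin d → c00) (w : Fin d → ℕ∞)
      (hf : ∀ q, WT P (f q) (w q))
      (hadm : Admissible (Schreier (P.n j)) f)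
      (hvfg : ∀ q r : Fin d, (q : ℕ) + 1 = (r : ℕ) → (maxSupp (f q) : ℕ∞) < w r) :
      WT P ((P.m j : ℝ)⁻¹ • ∑ q, f q) ((P.m j : ℕ) : ℕ∞)

/-- The norm of `X̃_iw` on finitely supported vectors. -/
def tNorm (P : IWParams) (x : c00) : ℝ :=
  sSup {r | ∃ f, (∃ w, WT P f w) ∧ r = evalPair f x}

end

/-! ### Schreier families -/

lemma empty_mem_schreier {n : ℕ} (hn : 1 ≤ n) : (∅ : Finset ℕ) ∈ Schreier n := by
  obtain ⟨k, rfl⟩ := Nat.exists_eq_add_of_le' hn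
  exact ⟨0, Fin.elim0, fun k => k.elim0, fun k => k.elim0, by simp, by simp⟩

/-- For `n ≥ 1` the constraint `d ≤ min F` keeps `0` out of the sets of `Schreier n`. -/
lemma pos_of_mem_schreier {n : ℕ} (hn : 1 ≤ n) {F : Finset ℕ} (hF : F ∈ Schreier n) {i : ℕ}
    (hi : i ∈ F) : 1 ≤ i := by
  obtain ⟨k, rfl⟩ := Nat.exists_eq_add_of_le' hn
  obtain ⟨d, G, -, -, hd, rfl⟩ := hF
  have h := hd i hi
  obtain ⟨k, -, -⟩ := Finset.mem_biUnion.1 hi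
  have := k.pos
  omega

/-- Inclusion of consecutive families; it fails for sets containing `0` (only `{0} ∈ Schreier 0`). -/
lemma schreier_succ {n : ℕ} {F : Finset ℕ} (hF : F ∈ Schreier n) (hpos : ∀ i ∈ F, 1 ≤ i) :
    F ∈ Schreier (n + 1) :=
  ⟨1, fun _ => F, fun _ => hF, fun k l h => by omega, hpos, by ext; simp⟩

lemma schreier_mono {a b : ℕ} (hab : a ≤ b) {F : Finset ℕ} (hF : F ∈ Schreier a)
    (hpos : ∀ i ∈ F, 1 ≤ i) : F ∈ Schreier b := by
  induction b, hab using Nat.le_induction with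
  | base => exact hF
  | succ b _ ih => exact schreier_succ ih hpos

/-- The Schreier families are hereditary and spreading: a nonempty `B` which can be pushed to the left
into `F ∈ Schreier n` by a strictly increasing map lies in `Schreier n`. -/
lemma schreier_spread (t : ℕ → ℕ) : ∀ (n : ℕ) (F B : Finset ℕ), F ∈ Schreier n → B.Nonempty →
    StrictMonoOn t B → (∀ b ∈ B, t b ≤ b) → (∀ b ∈ B, t b ∈ F) → B ∈ Schreier n := by
  intro n
  induction n with
  | zero =>
    rintro F B ⟨i, rfl⟩ ⟨b, hb⟩ hm - hF
    refine ⟨b, Finset.eq_singleton_iff_unique_mem.2 ⟨hb, fun b' hb' => hm.injOn hb' hb ?_⟩⟩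
    rw [Finset.mem_singleton.1 (hF b hb), Finset.mem_singleton.1 (hF b' hb')]
  | succ n ih =>
    rintro F B ⟨d, G, hG, hlt, hd, rfl⟩ hB hm hle hF
    -- Only the pieces `G k` that are hit may be kept, since `∅ ∉ Schreier 0`.
    let K : Finset (Fin d) := {k | (B.filter fun b => t b ∈ G k).Nonempty}
    have hK : K.card ≤ d := by simpa using K.card_le_univ
    refine ⟨K.card, fun k => B.filter fun b => t b ∈ G (K.orderEmbOfFin rfl k), ?_, ?_, ?_, ?_⟩
    · intro k
      have hk := K.orderEmbOfFin_mem rfl k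
      refine ih _ _ (hG (K.orderEmbOfFin rfl k)) (Finset.mem_filter.1 hk).2 (hm.mono ?_) ?_ ?_
      · intro b hb; exact (Finset.mem_filter.1 hb).1
      · intro b hb; exact hle b (Finset.mem_filter.1 hb).1
      · intro b hb; exact (Finset.mem_filter.1 hb).2
    · intro k l hkl i hi j hj
      obtain ⟨hi, hi'⟩ := Finset.mem_filter.1 hi
      obtain ⟨hj, hj'⟩ := Finset.mem_filter.1 hj
      exact (hm.lt_iff_lt hi hj).1 (hlt _ _ ((K.orderEmbOfFin rfl).strictMono hkl) _ hi' _ hj')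
    · intro i hi
      exact (hK.trans (hd _ (hF i hi))).trans (hle i hi)
    · ext b
      simp only [Finset.mem_biUnion, Finset.mem_univ, true_and, Finset.mem_filter]
      refine ⟨fun hb => ?_, fun ⟨_, h, _⟩ => h⟩
      obtain ⟨k, -, hk⟩ := Finset.mem_biUnion.1 (hF b hb)
      have hkK : k ∈ K := Finset.mem_filter.2 ⟨Finset.mem_univ _, b, Finset.mem_filter.2 ⟨hb, hk⟩⟩
      have : k ∈ Set.range (K.orderEmbOfFin rfl) := by
        rw [Finset.range_orderEmbOfFin]; exact hkK
      obtain ⟨k', rfl⟩ := this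
      exact ⟨k', hb, hk⟩

/-- If `M ∈ Schreier N` separates the points of `C`, then `C` without its least point is a spread of a
subset of `M`: send `b` to the largest element of `M` below it. -/
lemma erase_min_mem {N : ℕ} (hN : 1 ≤ N) {M C : Finset ℕ} (hM : M ∈ Schreier N)
    (hC : ∀ b ∈ C, ∀ b' ∈ C, b < b' → ∃ a ∈ M, b < a ∧ a < b') (hne : C.Nonempty) :
    C.erase (C.min' hne) ∈ Schreier N := by
  rcases (C.erase (C.min' hne)).eq_empty_or_nonempty with h | h
  · rw [h]; exact empty_mem_schreier hN
  let t : ℕ → ℕ := fun b => (M.filter (· < b)).sup id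
  have ht : ∀ b ∈ C.erase (C.min' hne), t b ∈ M ∧ t b < b := by
    intro b hb
    have hb' := Finset.mem_of_mem_erase hb
    obtain ⟨a, ha, -, hab⟩ := hC _ (C.min'_mem hne) b hb'
      (lt_of_le_of_ne (C.min'_le b hb') (Finset.ne_of_mem_erase hb).symm)
    obtain ⟨v, hv, hv'⟩ := Finset.exists_mem_eq_sup (M.filter (· < b))
      ⟨a, Finset.mem_filter.2 ⟨ha, hab⟩⟩ id
    have : t b = v := hv'
    rw [this]
    exact Finset.mem_filter.1 hv
  refine schreier_spread t N M _ hM h ?_ (fun b hb => (ht b hb).2.le) fun b hb => (ht b hb).1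
  intro b hb b' hb' hlt
  obtain ⟨a, ha, hba, hab'⟩ := hC b (Finset.mem_of_mem_erase hb) b' (Finset.mem_of_mem_erase hb') hlt
  have h1 : a ≤ t b' := Finset.le_sup (f := id) (Finset.mem_filter.2 ⟨ha, hab'⟩)
  exact ((ht b hb).2.trans hba).trans_le h1

/-! ### Supports and the pairing -/

lemma minSupp_le {x : c00} {i : ℕ} (hi : i ∈ x.support) : minSupp x ≤ i := by
  rw [minSupp, dif_pos ⟨i, hi⟩]; exact Finset.min'_le _ _ hi

lemma le_maxSupp {x : c00} {i : ℕ} (hi : i ∈ x.support) : i ≤ maxSupp x := by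
  rw [maxSupp, dif_pos ⟨i, hi⟩]; exact Finset.le_max' _ _ hi

lemma Blocks.lt {x y : c00} (h : Blocks x y) {i j : ℕ} (hi : i ∈ x.support) (hj : j ∈ y.support) :
    i < j :=
  (le_maxSupp hi).trans_lt (lt_of_lt_of_le h (minSupp_le hj))

lemma evalPair_eq (f x : c00) : evalPair f x = Finsupp.linearCombination ℝ (fun i => x i) f := by
  simp [evalPair, Finsupp.linearCombination_apply]

lemma evalPair_smul_left (a : ℝ) (f x : c00) : evalPair (a • f) x = a * evalPair f x := by
  simp only [evalPair_eq, map_smul, smul_eq_mul]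

lemma evalPair_neg_left (f x : c00) : evalPair (-f) x = -evalPair f x := by
  simp only [evalPair_eq, map_neg]

lemma evalPair_sum_left {d : ℕ} (g : Fin d → c00) (x : c00) :
    evalPair (∑ q, g q) x = ∑ q, evalPair (g q) x := by
  simp only [evalPair_eq, map_sum]

lemma evalPair_sum_right {m : ℕ} (f : c00) (c : Fin m → ℝ) (x : Fin m → c00) :
    evalPair f (∑ i, c i • x i) = ∑ i, c i * evalPair f (x i) := by
  simp only [evalPair, Finsupp.sum, Finset.mul_sum, Finsupp.finsetSum_apply, Finsupp.smul_apply,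
    smul_eq_mul]
  rw [Finset.sum_comm]
  exact Finset.sum_congr rfl fun _ _ => Finset.sum_congr rfl fun _ _ => by ring

lemma exists_mem_support_of_evalPair_ne {f x : c00} (h : evalPair f x ≠ 0) :
    ∃ k, k ∈ f.support ∧ k ∈ x.support := by
  obtain ⟨k, hk, hk'⟩ := Finset.exists_ne_zero_of_sum_ne_zero h
  exact ⟨k, hk, Finsupp.mem_support_iff.2 (right_ne_zero_of_mul hk')⟩

/-! ### The norming set -/

lemma IWParams.one_le_prod (P : IWParams) {l : ℕ} (js : Fin l → ℕ) : 1 ≤ ∏ i, P.m (js i) := by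
  refine Finset.prod_induction _ (1 ≤ ·) (fun a b => Nat.mul_pos) le_rfl fun i _ => ?_
  have := P.m_mono.monotone (Nat.zero_le (js i))
  rw [P.m_first] at this
  omega

lemma IWParams.one_le_sum (P : IWParams) {l : ℕ} (hl : 0 < l) (js : Fin l → ℕ) :
    1 ≤ ∑ i, P.n (js i) := by
  have h1 := P.n_mono.monotone (Nat.zero_le (js ⟨0, hl⟩))
  rw [P.n_first] at h1
  exact h1.trans (Finset.single_le_sum (f := fun i => P.n (js i)) (fun _ _ => Nat.zero_le _)
    (Finset.mem_univ _))

lemma WIW.abs_le_one {P : IWParams} {f : c00} {w : ℕ∞} (h : WIW P f w) : ∀ i, |f i| ≤ 1 := by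
  induction h with
  | unit k s hs =>
    intro i
    rw [Finsupp.single_apply]
    rcases hs with rfl | rfl <;> split_ifs <;> simp
  | op l hl js d f w hf hadm hvfg ih =>
    intro i
    have hw : (1 : ℝ) ≤ ((∏ i, P.m (js i) : ℕ) : ℝ) := by exact_mod_cast P.one_le_prod js
    -- The summands have disjoint supports, so at most one is nonzero at `i`.
    have hsum : |∑ q, f q i| ≤ 1 := by
      by_cases hq : ∃ q, f q i ≠ 0
      · obtain ⟨q, hq⟩ := hq
        rw [Finset.sum_eq_single q]
        · exact ih q i
        · intro r _ hr
          by_contra hne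
          rcases lt_or_gt_of_ne hr with h | h
          · exact lt_irrefl _ ((hadm.2.1 _ _ h).lt (Finsupp.mem_support_iff.2 hne)
              (Finsupp.mem_support_iff.2 hq))
          · exact lt_irrefl _ ((hadm.2.1 _ _ h).lt (Finsupp.mem_support_iff.2 hq)
              (Finsupp.mem_support_iff.2 hne))
        · simp
      · push Not at hq
        simp [hq]
    rw [Finsupp.smul_apply, Finsupp.finsetSum_apply, smul_eq_mul, abs_mul,
      abs_of_nonneg (inv_nonneg.2 (by linarith))]
    exact mul_le_one₀ (inv_le_one_of_one_le₀ hw) (abs_nonneg _) hsum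

lemma WIW.neg {P : IWParams} {f : c00} {w : ℕ∞} (h : WIW P f w) : WIW P (-f) w := by
  induction h with
  | unit k s hs =>
    rw [← Finsupp.single_neg]
    exact .unit k (-s) (by rcases hs with rfl | rfl <;> simp)
  | op l hl js d f w hf hadm hvfg ih =>
    rw [← smul_neg, ← Finset.sum_neg_distrib]
    refine .op l hl js d (fun q => -f q) w ih ?_ ?_
    · simpa only [Admissible, Blocks, minSupp, maxSupp, Finsupp.support_neg] using hadm
    · simpa only [maxSupp, Finsupp.support_neg] using hvfg

lemma WIW.evalPair_le {P : IWParams} {f : c00} {w : ℕ∞} (h : WIW P f w) (x : c00) :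
    evalPair f x ≤ ∑ i ∈ x.support, |x i| := by
  calc evalPair f x = ∑ i ∈ f.support, f i * x i := rfl
    _ ≤ ∑ i ∈ f.support, |x i| := by
        refine Finset.sum_le_sum fun i _ => (le_abs_self _).trans ?_
        rw [abs_mul]
        exact mul_le_of_le_one_left (abs_nonneg _) (h.abs_le_one i)
    _ ≤ ∑ i ∈ f.support ∪ x.support, |x i| :=
        Finset.sum_le_sum_of_subset_of_nonneg Finset.subset_union_left fun _ _ _ => abs_nonneg _
    _ = ∑ i ∈ x.support, |x i| := by
        refine (Finset.sum_subset Finset.subset_union_right fun i _ hi => ?_).symm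
        simp [Finsupp.notMem_support_iff.1 hi]

lemma WIW.abs_evalPair_le {P : IWParams} {f : c00} {w : ℕ∞} (h : WIW P f w) (x : c00) :
    |evalPair f x| ≤ iwNorm P x := by
  have hb : BddAbove {r | ∃ f, memWIW P f ∧ r = evalPair f x} := by
    refine ⟨∑ i ∈ x.support, |x i|, ?_⟩
    rintro _ ⟨f, ⟨w, hf⟩, rfl⟩
    exact hf.evalPair_le x
  refine abs_le'.2 ⟨le_csSup hb ⟨f, ⟨w, h⟩, rfl⟩, le_csSup hb ⟨-f, ⟨w, h.neg⟩, ?_⟩⟩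
  rw [evalPair_neg_left]

/-! ### The estimate -/

/-- The total mass of the split indices is at most `2ε`. Here `ψ i` stands for `min supp x_i`, `M` for
the set of the `min supp g_q`, and `hsep` says that `M` separates each split `ψ i` from all later ones. -/
lemma split_mass_le {n N m : ℕ} {ε : ℝ} (hN : 1 ≤ N) (hNn : N < n) {c : Fin m → ℝ} {ψ : Fin m → ℕ}
    (hψ : StrictMono ψ) {y : c00} (hyc : ∀ i, y (ψ i) = c i) (hy : IsBasicSCC n ε y)
    {M : Finset ℕ} (hM : M ∈ Schreier N) (B : Finset (Fin m)) (hB : ∀ i ∈ B, c i ≠ 0)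
    (hsep : ∀ i ∈ B, ∀ j, i < j → ∃ a ∈ M, ψ i < a ∧ a < ψ j) :
    ∑ i ∈ B, c i ≤ 2 * ε := by
  obtain ⟨F, hsupp, hF, -, -, hε⟩ := hy
  have hN' : N ≤ n - 1 := by omega
  let C := B.image ψ
  have hCF : C ⊆ F := by
    intro b hb
    obtain ⟨i, hi, rfl⟩ := Finset.mem_image.1 hb
    exact hsupp (Finsupp.mem_support_iff.2 (by rw [hyc]; exact hB i hi))
  have hpos : ∀ b ∈ C, 1 ≤ b := fun b hb => pos_of_mem_schreier (by omega) hF (hCF hb)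
  have hsum : ∑ i ∈ B, c i = ∑ b ∈ C, y b := by
    rw [Finset.sum_image hψ.injective.injOn]
    exact Finset.sum_congr rfl fun i _ => (hyc i).symm
  rw [hsum]
  rcases C.eq_empty_or_nonempty with h | hne
  · have := hε ∅ (Finset.empty_subset _) (empty_mem_schreier (by omega))
    rw [h]
    simp only [Finset.sum_empty] at this ⊢
    linarith
  have h1 : C.erase (C.min' hne) ∈ Schreier N := by
    refine erase_min_mem hN hM ?_ hne
    intro b hb b' hb' hlt
    obtain ⟨i, hi, rfl⟩ := Finset.mem_image.1 hb
    obtain ⟨j, hj, rfl⟩ := Finset.mem_image.1 hb'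
    exact hsep i hi j (hψ.lt_iff_lt.1 hlt)
  have h2 := hε _ ((Finset.erase_subset _ _).trans hCF)
    (schreier_mono hN' h1 fun b hb => hpos b (Finset.mem_of_mem_erase hb))
  have h3 := hε {C.min' hne} (Finset.singleton_subset_iff.2 (hCF (C.min'_mem hne)))
    (schreier_mono (Nat.zero_le _) ⟨_, rfl⟩ fun b hb => by
      rw [Finset.mem_singleton.1 hb]; exact hpos _ (C.min'_mem hne))
  rw [Finset.sum_singleton] at h3
  rw [← Finset.add_sum_erase C (fun b => y b) (C.min'_mem hne)]
  linarith

/-- Let `x = ∑ c_i x_i` be an `(n, ε)`-s.c.c. with `‖x_i‖ ≤ 1`, and let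
`f ∈ W_iw` be a weighted functional with vector weight `(j_1, …, j_l)` such that
`n_{j_1} + ⋯ + n_{j_l} < n`.  Then `|f(x)| ≤ (1 + 2 ε w(f)) / w(f)`. -/
theorem statement10 (P : IWParams) (n : ℕ) (ε : ℝ) (m : ℕ) (c : Fin m → ℝ)
    (x : Fin m → c00) (hscc : IsSCC n ε c x) (hx : ∀ i, iwNorm P (x i) ≤ 1)
    (l : ℕ) (hl : 0 < l) (js : Fin l → ℕ) (d : ℕ) (g : Fin d → c00) (w : Fin d → ℕ∞)
    (hg : ∀ q, WIW P (g q) (w q))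
    (hadm : Admissible (Schreier (∑ i, P.n (js i))) g)
    (hvfg : ∀ q r : Fin d, (q : ℕ) + 1 = (r : ℕ) → (maxSupp (g q) : ℕ∞) < w r)
    (hsum : (∑ i, P.n (js i)) < n) :
    |evalPair (((∏ i, P.m (js i) : ℕ) : ℝ)⁻¹ • ∑ q, g q) (∑ i, c i • x i)| ≤
      (1 + 2 * ε * ((∏ i, P.m (js i) : ℕ) : ℝ)) / ((∏ i, P.m (js i) : ℕ) : ℝ) := by
  obtain ⟨hxne, hxblk, hbasic⟩ := hscc
  set W : ℝ := ((∏ i, P.m (js i) : ℕ) : ℝ) with hW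
  have hW1 : (1 : ℝ) ≤ W := by rw [hW]; exact_mod_cast P.one_le_prod js
  have hWpos : 0 < W := by linarith
  set f : c00 := W⁻¹ • ∑ q, g q with hf
  have hfW : WIW P f ((∏ i, P.m (js i) : ℕ) : ℕ∞) := .op l hl js d g w hg hadm hvfg
  have hmin : ∀ z : c00, z.support.Nonempty → minSupp z ∈ z.support := by
    intro z hz
    rw [minSupp, dif_pos hz]
    exact Finset.min'_mem _ _
  have hψ : StrictMono fun i => minSupp (x i) := fun i j hij =>
    (hxblk i j hij).lt (hmin _ (hxne i)) (hmin _ (hxne j))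
  set y : c00 := ∑ i, c i • Finsupp.single (minSupp (x i)) (1 : ℝ) with hy
  have hyc : ∀ i, y (minSupp (x i)) = c i := by
    intro i
    rw [hy, Finsupp.finsetSum_apply, Finset.sum_eq_single i]
    · simp
    · intro j _ hj
      simp [hψ.injective.ne hj]
    · simp
  have hc0 : ∀ i, 0 ≤ c i := by
    obtain ⟨F, -, -, h0, -, -⟩ := hbasic
    intro i
    rw [← hyc]
    exact h0 _
  have hc1 : ∑ i, c i = 1 := by
    obtain ⟨F, hsupp, -, -, h1, -⟩ := hbasic
    rw [← h1]
    have h2 : ∑ i, c i = ∑ b ∈ Finset.univ.image (fun i => minSupp (x i)), y b := by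
      rw [Finset.sum_image hψ.injective.injOn]
      exact Finset.sum_congr rfl fun i _ => (hyc i).symm
    have h3 : y.support ⊆ Finset.univ.image (fun i => minSupp (x i)) := by
      intro b hb
      by_contra hb'
      refine Finsupp.mem_support_iff.1 hb ?_
      rw [hy, Finsupp.finsetSum_apply]
      refine Finset.sum_eq_zero fun i _ => ?_
      have : minSupp (x i) ≠ b := fun h => hb' (Finset.mem_image.2 ⟨i, Finset.mem_univ _, h⟩)
      simp [this]
    rw [h2, ← Finset.sum_subset h3 fun b _ hb => Finsupp.notMem_support_iff.1 hb,
      ← Finset.sum_subset hsupp fun b _ hb => Finsupp.notMem_support_iff.1 hb]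
  classical
  let B : Finset (Fin m) := {i | c i ≠ 0 ∧ ∃ q r, q < r ∧
    (∃ k, k ∈ (g q).support ∧ k ∈ (x i).support) ∧ ∃ k, k ∈ (g r).support ∧ k ∈ (x i).support}
  have hmass : ∑ i ∈ B, c i ≤ 2 * ε := by
    refine split_mass_le (P.one_le_sum hl js) hsum hψ hyc hbasic hadm.2.2 B
      (fun i hi => (Finset.mem_filter.1 hi).2.1) ?_
    intro i hi j hij
    obtain ⟨-, -, q, r, hqr, ⟨k, hkq, hki⟩, k', hkr, hki'⟩ := Finset.mem_filter.1 hi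
    -- `g_q` reaches past `min supp x_i`, so `g_r` starts after it, but still inside `x_i`.
    refine ⟨minSupp (g r), Finset.mem_image_of_mem _ (Finset.mem_univ r), ?_, ?_⟩
    · exact (minSupp_le hki).trans_lt ((hadm.2.1 q r hqr).lt hkq (hmin _ (hadm.1 r)))
    · exact (minSupp_le hkr).trans_lt ((hxblk i j hij).lt hki' (hmin _ (hxne j)))
  have hterm : ∀ i, |c i * evalPair f (x i)| ≤ c i * W⁻¹ + if i ∈ B then c i else 0 := by
    intro i
    rw [abs_mul, abs_of_nonneg (hc0 i)]
    split_ifs with hi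
    · have h1 := mul_le_mul_of_nonneg_left ((hfW.abs_evalPair_le (x i)).trans (hx i)) (hc0 i)
      have h2 := mul_nonneg (hc0 i) (inv_nonneg.2 hWpos.le)
      linarith
    · rw [add_zero]
      rcases eq_or_ne (c i) 0 with h0 | h0
      · simp [h0]
      refine mul_le_mul_of_nonneg_left ?_ (hc0 i)
      rw [hf, evalPair_smul_left, evalPair_sum_left, abs_mul, abs_of_nonneg (inv_nonneg.2 hWpos.le)]
      refine mul_le_of_le_one_right (inv_nonneg.2 hWpos.le) ?_
      by_cases hq : ∃ q, evalPair (g q) (x i) ≠ 0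
      · obtain ⟨q, hq⟩ := hq
        have hq' := exists_mem_support_of_evalPair_ne hq
        rw [Finset.sum_eq_single q]
        · exact ((hg q).abs_evalPair_le (x i)).trans (hx i)
        · intro r _ hr
          by_contra hne
          have hr' := exists_mem_support_of_evalPair_ne hne
          refine hi (Finset.mem_filter.2 ⟨Finset.mem_univ _, h0, ?_⟩)
          rcases lt_or_gt_of_ne hr with h | h
          · exact ⟨r, q, h, hr', hq'⟩
          · exact ⟨q, r, h, hq', hr'⟩
        · simp
      · push Not at hq
        simp [hq]
  rw [evalPair_sum_right]
  calc |∑ i, c i * evalPair f (x i)| ≤ ∑ i, |c i * evalPair f (x i)| := Finset.abs_sum_le_sum_abs _ _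
    _ ≤ ∑ i, (c i * W⁻¹ + if i ∈ B then c i else 0) := Finset.sum_le_sum fun i _ => hterm i
    _ = W⁻¹ + ∑ i ∈ B, c i := by
        rw [Finset.sum_add_distrib, ← Finset.sum_mul, hc1, one_mul, Finset.sum_ite_mem,
          Finset.univ_inter]
    _ ≤ W⁻¹ + 2 * ε := by linarith
    _ = (1 + 2 * ε * W) / W := by field_simp
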